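/- The function φ(z) = exp(−z − γ − e^{−(z+γ)}) is a probability density on ℝ whose cumulative distribution function is z ↦ exp(−e^{−(z+γ)}); it has mean zero, ∫_{ℝ} z φ(z) dz = 0, and variance π²/6, ∫_{ℝ} z² φ(z) dz = π²/6. -/

import Mathlib

open MeasureTheory Real

/-- The standardized univariate Gumbel density `φ(z) = exp(−z − γ − e^{−(z+γ)})`. -/
noncomputable def gumbelPdf (z : ℝ) : ℝ :=
  Real.exp (-z - Real.eulerMascheroniConstant - Real.exp (-(z + Real.eulerMascheroniConstant)))

/-- The multivariate Gumbel density `φ(z; μ, σ) = ∏_j (1/σ) φ((z_j − μ_j)/σ)`. -/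
noncomputable def mGumbelPdf {J : ℕ} (μ : Fin J → ℝ) (σ : ℝ) (z : Fin J → ℝ) : ℝ :=
  ∏ j, (1 / σ) * gumbelPdf ((z j - μ j) / σ)

open ProbabilityTheory Filter Topology

lemma gumbelPdf_pos (z : ℝ) : 0 < gumbelPdf z := exp_pos _

lemma continuous_gumbelPdf : Continuous gumbelPdf := by
  unfold gumbelPdf
  fun_prop

lemma image_exp_neg_add_univ (c : ℝ) :
    (fun z : ℝ ↦ exp (-(z + c))) '' Set.univ = Set.Ioi 0 := by
  ext x
  simp only [Set.image_univ, Set.mem_range, Set.mem_Ioi]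
  refine ⟨fun ⟨z, hz⟩ ↦ hz ▸ exp_pos _, fun hx ↦ ⟨-log x - c, ?_⟩⟩
  simp [exp_log hx]

lemma injOn_exp_neg_add (c : ℝ) : Set.InjOn (fun z : ℝ ↦ exp (-(z + c))) Set.univ := by
  intro x _ y _ h
  simpa using h

lemma hasDerivAt_exp_neg_add (c z : ℝ) :
    HasDerivAt (fun z : ℝ ↦ exp (-(z + c))) (-exp (-(z + c))) z := by
  simpa using ((hasDerivAt_id z).add_const c).neg.exp

/-- The integrand of the Gumbel moment generating function, as the pullback of the integrand of
`Γ (1 - t)` along `z ↦ exp (-(z + γ))`. -/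
lemma exp_mul_gumbelPdf_eq (t z : ℝ) :
    exp (t * z) * gumbelPdf z = exp (-(eulerMascheroniConstant * t)) *
      (|-exp (-(z + eulerMascheroniConstant))| •
        (exp (-exp (-(z + eulerMascheroniConstant))) *
          exp (-(z + eulerMascheroniConstant)) ^ ((1 - t) - 1))) := by
  rw [abs_neg, abs_of_pos (exp_pos _), ← exp_mul, gumbelPdf, smul_eq_mul]
  simp only [← exp_add]
  congr 1
  ring

lemma integrable_exp_mul_gumbelPdf {t : ℝ} (ht : t < 1) :
    Integrable (fun z ↦ exp (t * z) * gumbelPdf z) := by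
  simp_rw [exp_mul_gumbelPdf_eq]
  refine Integrable.const_mul ?_ _
  rw [← integrableOn_univ, ← integrableOn_image_iff_integrableOn_abs_deriv_smul
    (g := fun x ↦ exp (-x) * x ^ ((1 - t) - 1)) MeasurableSet.univ
    (fun z _ ↦ (hasDerivAt_exp_neg_add _ z).hasDerivWithinAt) (injOn_exp_neg_add _),
    image_exp_neg_add_univ]
  exact GammaIntegral_convergent (by linarith)

lemma integral_exp_mul_gumbelPdf {t : ℝ} (ht : t < 1) :
    ∫ z, exp (t * z) * gumbelPdf z = exp (-(eulerMascheroniConstant * t)) * Gamma (1 - t) := by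
  simp_rw [exp_mul_gumbelPdf_eq]
  rw [integral_const_mul, ← setIntegral_univ, ← integral_image_eq_integral_abs_deriv_smul
    (g := fun x ↦ exp (-x) * x ^ ((1 - t) - 1)) MeasurableSet.univ
    (fun z _ ↦ (hasDerivAt_exp_neg_add _ z).hasDerivWithinAt) (injOn_exp_neg_add _),
    image_exp_neg_add_univ, Gamma_eq_integral (by linarith)]

lemma integrable_gumbelPdf : Integrable gumbelPdf := by
  simpa using integrable_exp_mul_gumbelPdf zero_lt_one

lemma integral_gumbelPdf : ∫ z, gumbelPdf z = 1 := by
  simpa using integral_exp_mul_gumbelPdf zero_lt_one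

lemma setIntegral_Iic_gumbelPdf (z : ℝ) :
    ∫ x in Set.Iic z, gumbelPdf x = exp (-exp (-(z + eulerMascheroniConstant))) := by
  rw [integral_Iic_of_hasDerivAt_of_tendsto' (m := 0)
    (f := fun x ↦ exp (-exp (-(x + eulerMascheroniConstant)))) ?_
    integrable_gumbelPdf.integrableOn ?_, sub_zero]
  · intro x _
    refine (hasDerivAt_exp_neg_add eulerMascheroniConstant x).neg.exp.congr_deriv ?_
    rw [gumbelPdf, Pi.neg_apply, neg_neg, ← exp_add]
    congr 1
    ring
  · refine tendsto_exp_neg_atTop_nhds_zero.comp (tendsto_exp_atTop.comp ?_)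
    exact tendsto_neg_atBot_atTop.comp (tendsto_atBot_add_const_right _ _ tendsto_id)

/-- The law on `ℝ` with density `gumbelPdf`. -/
noncomputable def gumbelMeasure : Measure ℝ :=
  volume.withDensity fun z ↦ ENNReal.ofReal (gumbelPdf z)

lemma measurable_ofReal_gumbelPdf : Measurable fun z ↦ ENNReal.ofReal (gumbelPdf z) :=
  continuous_gumbelPdf.measurable.ennreal_ofReal

lemma integral_gumbelMeasure (g : ℝ → ℝ) :
    ∫ z, g z ∂gumbelMeasure = ∫ z, g z * gumbelPdf z := by
  rw [gumbelMeasure, integral_withDensity_eq_integral_toReal_smul measurable_ofReal_gumbelPdf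
    (by simp)]
  simp [ENNReal.toReal_ofReal (gumbelPdf_pos _).le, mul_comm]

lemma mgf_id_gumbelMeasure {t : ℝ} (ht : t < 1) :
    mgf id gumbelMeasure t = exp (-(eulerMascheroniConstant * t)) * Gamma (1 - t) := by
  rw [mgf, integral_gumbelMeasure]
  exact integral_exp_mul_gumbelPdf ht

lemma zero_mem_interior_integrableExpSet_gumbelMeasure :
    0 ∈ interior (integrableExpSet id gumbelMeasure) := by
  rw [mem_interior_iff_mem_nhds]
  filter_upwards [Iio_mem_nhds zero_lt_one] with t ht
  rw [integrableExpSet, Set.mem_ofPred_eq, gumbelMeasure,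
    integrable_withDensity_iff measurable_ofReal_gumbelPdf (by simp)]
  simpa [ENNReal.toReal_ofReal (gumbelPdf_pos _).le] using integrable_exp_mul_gumbelPdf ht

lemma integral_pow_mul_gumbelPdf (n : ℕ) :
    ∫ z, z ^ n * gumbelPdf z = iteratedDeriv n (mgf id gumbelMeasure) 0 := by
  rw [iteratedDeriv_mgf_zero zero_mem_interior_integrableExpSet_gumbelMeasure,
    integral_gumbelMeasure]
  simp

lemma hasDerivAt_mgf_id_gumbelMeasure_zero : HasDerivAt (mgf id gumbelMeasure) 0 0 := by
  have hGamma : HasDerivAt (fun t : ℝ ↦ Gamma (1 - t)) eulerMascheroniConstant 0 := by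
    have h1 : HasDerivAt Gamma (-eulerMascheroniConstant) (1 - 0) := by
      simpa using hasDerivAt_Gamma_one
    simpa using h1.comp_const_sub 1 0
  have hexp : HasDerivAt (fun t : ℝ ↦ exp (-(eulerMascheroniConstant * t)))
      (-eulerMascheroniConstant) 0 := by
    simpa using ((hasDerivAt_id (0 : ℝ)).const_mul eulerMascheroniConstant).neg.exp
  have hprod := hexp.mul hGamma
  simp only [mul_zero, neg_zero, exp_zero, sub_zero, Gamma_one, mul_one, one_mul,
    neg_add_cancel] at hprod
  refine hprod.congr_of_eventuallyEq ?_
  filter_upwards [Iio_mem_nhds zero_lt_one] with t ht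
  exact mgf_id_gumbelMeasure ht

/-- Euler's reflection formula in terms of the Gumbel moment generating function. -/
lemma mgf_mul_mgf_neg_mul_sin {t : ℝ} (ht : |t| < 1) :
    mgf id gumbelMeasure t * mgf id gumbelMeasure (-t) * sin (π * t) = π * t := by
  obtain ⟨h1, h2⟩ := abs_lt.mp ht
  rcases eq_or_ne t 0 with rfl | h0
  · simp
  have hsin : sin (π * t) ≠ 0 := by
    rw [Ne, sin_eq_zero_iff_of_lt_of_lt (by nlinarith [pi_pos]) (by nlinarith [pi_pos])]
    exact mul_ne_zero pi_ne_zero h0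
  have hrefl := Gamma_mul_Gamma_one_sub t
  rw [eq_div_iff hsin] at hrefl
  have hexp : exp (-(eulerMascheroniConstant * t)) * exp (-(eulerMascheroniConstant * -t)) = 1 := by
    rw [← exp_add]
    simp
  rw [mgf_id_gumbelMeasure h2, mgf_id_gumbelMeasure (by linarith),
    show 1 - -t = t + 1 by ring, Gamma_add_one h0]
  linear_combination t * hrefl + (t * Gamma t * Gamma (1 - t) * sin (π * t)) * hexp

lemma iteratedDeriv_two_mgf_id_gumbelMeasure_zero :
    iteratedDeriv 2 (mgf id gumbelMeasure) 0 = π ^ 2 / 6 := by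
  set M := mgf id gumbelMeasure with hM
  have hM_an : AnalyticAt ℝ M 0 :=
    analyticAt_mgf zero_mem_interior_integrableExpSet_gumbelMeasure
  have hM0 : M 0 = 1 := by simp [hM, mgf_id_gumbelMeasure zero_lt_one]
  have hM1 : deriv M 0 = 0 := hasDerivAt_mgf_id_gumbelMeasure_zero.deriv
  set N : ℝ → ℝ := fun t ↦ M (-t) with hN
  have hN_iter (k : ℕ) : iteratedDeriv k N 0 = (-1) ^ k * iteratedDeriv k M 0 := by
    simpa using iteratedDeriv_comp_neg k M 0
  have hM_cd (k : ℕ) : ContDiffAt ℝ k M 0 := hM_an.contDiffAt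
  have hN_cd (k : ℕ) : ContDiffAt ℝ k N 0 := by
    have h : ContDiffAt ℝ k M (-0) := by simpa using hM_cd k
    exact h.comp 0 contDiffAt_id.neg
  have hS_cd (k : ℕ) : ContDiffAt ℝ k (fun t ↦ sin (π * t)) 0 := by fun_prop
  have hS_iter (k : ℕ) : iteratedDeriv k (fun t ↦ sin (π * t)) 0 =
      π ^ k * iteratedDeriv k sin 0 := by
    simpa using congrFun (iteratedDeriv_comp_const_mul (n := k) contDiff_sin π) 0
  have hprod : (M * N) * (fun t ↦ sin (π * t)) =ᶠ[𝓝 0] fun t ↦ π * t := by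
    filter_upwards [Metric.ball_mem_nhds (0 : ℝ) zero_lt_one] with t ht
    exact mgf_mul_mgf_neg_mul_sin (by simpa using ht)
  have h3 := hprod.iteratedDeriv_eq 3
  rw [iteratedDeriv_mul (f := M * N) ((hM_cd 3).mul (hN_cd 3)) (hS_cd 3)] at h3
  have hlin : iteratedDeriv 3 (fun t : ℝ ↦ π * t) 0 = 0 := by
    simp [iteratedDeriv_succ]
  have hP1 : iteratedDeriv 1 (M * N) 0 = 0 := by
    rw [iteratedDeriv_mul (hM_cd 1) (hN_cd 1)]
    simp [Finset.sum_range_succ, hN_iter, hM1]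
  have hP2 : iteratedDeriv 2 (M * N) 0 = 2 * iteratedDeriv 2 M 0 := by
    rw [iteratedDeriv_mul (hM_cd 2) (hN_cd 2)]
    simp [Finset.sum_range_succ, hN_iter, hM1, hM0]
    ring
  have hs1 : iteratedDeriv 1 sin 0 = 1 := by simp
  have hs3 : iteratedDeriv 3 sin 0 = -1 := by simp [iteratedDeriv_succ]
  have hP0 : iteratedDeriv 0 (M * N) 0 = 1 := by simp [hN, hM0]
  have hs0 : iteratedDeriv 0 sin 0 = 0 := by simp
  simp only [hlin, Finset.sum_range_succ, Finset.sum_range_zero, hS_iter, hP0, hP1, hP2, hs0, hs1,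
    hs3, Nat.sub_self, Nat.sub_zero, Nat.reduceSub, Nat.choose_zero_right, Nat.choose_self,
    show Nat.choose 3 2 = 3 from rfl] at h3
  have hpi := pi_pos
  push_cast at h3
  have h4 : π * (6 * iteratedDeriv 2 M 0 - π ^ 2) = 0 := by linear_combination h3
  rcases mul_eq_zero.mp h4 with h | h <;> linarith

/-- The standardized Gumbel density: it is a probability density with cdf
`z ↦ exp(−e^{−(z+γ)})`, mean zero and variance `π²/6`. -/
theorem gumbel_density_properties :
    (∀ z, 0 < gumbelPdf z) ∧
    (∫ z, gumbelPdf z) = 1 ∧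
    (∀ z, (∫ x in Set.Iic z, gumbelPdf x) =
      Real.exp (-Real.exp (-(z + Real.eulerMascheroniConstant)))) ∧
    (∫ z, z * gumbelPdf z) = 0 ∧
    (∫ z, z ^ 2 * gumbelPdf z) = Real.pi ^ 2 / 6 := by
  refine ⟨gumbelPdf_pos, integral_gumbelPdf, setIntegral_Iic_gumbelPdf, ?_, ?_⟩
  · simpa [hasDerivAt_mgf_id_gumbelMeasure_zero.deriv] using integral_pow_mul_gumbelPdf 1
  · rw [integral_pow_mul_gumbelPdf, iteratedDeriv_two_mgf_id_gumbelMeasure_zero]
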